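/- For every x ∈ U, the first derivative of the mean curvature at t = 0 is ∂H(t)/∂t |_{t=0} = −(f(x) + φ'(0)) − (1/n) Δf(x). -/

import Mathlib

open MeasureTheory Real Set
open scoped RealInnerProductSpace

noncomputable section

abbrev En (n : ℕ) : Type := EuclideanSpace ℝ (Fin n)

/-- Partial derivative of `F` in the `i`-th coordinate direction. -/
def pd {m : ℕ} {E : Type} [NormedAddCommGroup E] [NormedSpace ℝ E]
    (i : Fin m) (F : En m → E) (x : En m) : E :=
  fderiv ℝ F x (EuclideanSpace.single i 1)

/-- The induced (first fundamental form) metric of a map `Y : U → ℝ^{n+1}`. -/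
def gmet {n : ℕ} (Y : En n → En (n + 1)) (x : En n) : Matrix (Fin n) (Fin n) ℝ :=
  Matrix.of fun i j => ⟪pd i Y x, pd j Y x⟫

/-- The variation `X(t,x) = (1 + t f(x) + φ(t)) Φ(x)`. -/
def Xvar {n : ℕ} (f : En n → ℝ) (φ : ℝ → ℝ) (Φ : En n → En (n + 1)) (t : ℝ) (x : En n) :
    En (n + 1) :=
  (1 + t * f x + φ t) • Φ x

/-- Second fundamental form `h_{ij} = ⟨∂X/∂x_i, ∂N/∂x_j⟩`. -/
def sff {n : ℕ} (Y Nf : En n → En (n + 1)) (x : En n) : Matrix (Fin n) (Fin n) ℝ :=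
  Matrix.of fun i j => ⟪pd i Y x, pd j Nf x⟫

/-- Mean curvature `H = (1/n) Σ g^{ij} h_{ij}`. -/
def Hmean {n : ℕ} (Y Nf : En n → En (n + 1)) (x : En n) : ℝ :=
  (1 / (n : ℝ)) * ∑ i, ∑ j, (gmet Y x)⁻¹ i j * sff Y Nf x i j

/-- The volume element `√(det g)`. -/
def vElem {n : ℕ} (Y : En n → En (n + 1)) (x : En n) : ℝ :=
  Real.sqrt (gmet Y x).det

/-- `|∇u|² = Σ g^{ij} ∂_i u ∂_j u` with respect to the metric of `Φ`. -/
def gradSq {n : ℕ} (Φ : En n → En (n + 1)) (u : En n → ℝ) (x : En n) : ℝ :=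
  ∑ i, ∑ j, (gmet Φ x)⁻¹ i j * pd i u x * pd j u x

/-- Tangential gradient `∇u = Σ g^{ij} ∂_i u ∂_j Φ ∈ ℝ^{n+1}`. -/
def gradV {n : ℕ} (Φ : En n → En (n + 1)) (u : En n → ℝ) (x : En n) : En (n + 1) :=
  ∑ i, ∑ j, ((gmet Φ x)⁻¹ i j * pd i u x) • pd j Φ x

/-- Laplace–Beltrami operator `Δu = (1/√g) Σ ∂_i (√g g^{ij} ∂_j u)`. -/
def lapl {n : ℕ} (Φ : En n → En (n + 1)) (u : En n → ℝ) (x : En n) : ℝ :=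
  (vElem Φ x)⁻¹ * ∑ i, ∑ j, pd i (fun y => vElem Φ y * (gmet Φ y)⁻¹ i j * pd j u y) x

/-- Christoffel symbols of the metric of `Φ`. -/
def christoffel {n : ℕ} (Φ : En n → En (n + 1)) (k i j : Fin n) (x : En n) : ℝ :=
  (1 / 2) * ∑ l, (gmet Φ x)⁻¹ k l *
    (pd i (fun y => gmet Φ y l j) x + pd j (fun y => gmet Φ y l i) x
      - pd l (fun y => gmet Φ y i j) x)

/-- Hessian `(∇²u)_{ij} = ∂²u/∂x_i∂x_j − Σ_k Γ^k_{ij} ∂_k u`. -/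
def hess {n : ℕ} (Φ : En n → En (n + 1)) (u : En n → ℝ) (x : En n) (i j : Fin n) : ℝ :=
  pd i (fun y => pd j u y) x - ∑ k, christoffel Φ k i j x * pd k u x

/-!
Along a piece of the unit sphere, `X_t - t ∇f` is normal to the variation
`X_t = (1 + t f + φ(t)) Φ`, so by continuity `N_t` is its normalization. Rescaling a normal field
only rescales its tangential divergence, and `X_t` itself has tangential divergence `n`, whence
`H(t) = ‖X_t - t ∇f‖⁻¹ (1 - (t / n) div_{X_t} ∇f)`.
At `t = 0` the norm has derivative `f + φ'(0)` and `div_{X_0} ∇f = Δf`, while the remaining factor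
`div_{X_t} ∇f` only has to be continuous.
-/

open scoped Topology

theorem sum_det_updateRow {R ι : Type*} [CommRing R] [Fintype ι] [DecidableEq ι]
    (B C : Matrix ι ι R) :
    ∑ i, (B.updateRow i (C i)).det = ∑ i, ∑ j, B.adjugate j i * C i j := by
  refine Finset.sum_congr rfl fun i _ => ?_
  rw [← Matrix.cramer_transpose_apply, Matrix.cramer_eq_adjugate_mulVec,
    ← Matrix.adjugate_transpose]
  rfl

section MatrixCalculus

variable {𝕜 ι E : Type*} [NontriviallyNormedField 𝕜] [Fintype ι] [DecidableEq ι]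
  [NormedAddCommGroup E] [NormedSpace 𝕜 E] {A : E → Matrix ι ι 𝕜} {x : E}

theorem hasFDerivAt_matrix_det {A' : ι → ι → E →L[𝕜] 𝕜}
    (hA : ∀ i j, HasFDerivAt (fun y => A y i j) (A' i j) x) :
    HasFDerivAt (fun y => (A y).det) (∑ i, ∑ j, (A x).adjugate j i • A' i j) x := by
  let det : ContinuousMultilinearMap 𝕜 (fun _ : ι => ι → 𝕜) 𝕜 :=
    { (Matrix.detRowAlternating : (ι → 𝕜) [⋀^ι]→ₗ[𝕜] 𝕜).toMultilinearMap with
      cont := continuous_id.matrix_det (R := 𝕜) }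
  have hrow : ∀ i, HasFDerivAt (fun y => A y i) (ContinuousLinearMap.pi (A' i)) x := fun i =>
    hasFDerivAt_pi.2 (hA i)
  refine (HasFDerivAt.multilinear_comp det hrow).congr_fderiv (ContinuousLinearMap.ext fun v => ?_)
  simpa using! sum_det_updateRow (A x) (Matrix.of fun i j => A' i j v)

theorem differentiableAt_matrix_det (hA : ∀ i j, DifferentiableAt 𝕜 (fun y => A y i j) x) :
    DifferentiableAt 𝕜 (fun y => (A y).det) x :=
  (hasFDerivAt_matrix_det fun i j => (hA i j).hasFDerivAt).differentiableAt

theorem differentiableAt_matrix_inv (hA : ∀ i j, DifferentiableAt 𝕜 (fun y => A y i j) x)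
    (hdet : (A x).det ≠ 0) (i j : ι) : DifferentiableAt 𝕜 (fun y => (A y)⁻¹ i j) x := by
  simp only [Matrix.inv_def, Matrix.smul_apply, Ring.inverse_eq_inv', smul_eq_mul,
    Matrix.adjugate_apply]
  refine ((differentiableAt_matrix_det hA).inv hdet).mul
    (differentiableAt_matrix_det fun k l => ?_)
  obtain rfl | hk := eq_or_ne k j
  · simp
  · simpa [Matrix.updateRow_ne hk] using hA k l

end MatrixCalculus

theorem hasDerivAt_mul_of_continuousAt_zero {𝕜 : Type*} [NontriviallyNormedField 𝕜] {u : 𝕜 → 𝕜}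
    (hu : ContinuousAt u 0) : HasDerivAt (fun t => t * u t) (u 0) 0 := by
  rw [hasDerivAt_iff_tendsto_slope]
  refine (hu.tendsto.mono_left nhdsWithin_le_nhds).congr' ?_
  filter_upwards [self_mem_nhdsWithin] with t ht
  simp [slope_def_field, mul_div_cancel_left₀ _ (show t ≠ 0 from ht)]

section InnerProductSpace

variable {E ι : Type*} [NormedAddCommGroup E] [InnerProductSpace ℝ E] [Fintype ι]

theorem exists_smul_eq_of_inner_eq_zero {v : ι → E} {w u : E}
    (hv : LinearIndependent ℝ v) (hι : Fintype.card ι + 1 = Module.finrank ℝ E) (hw0 : w ≠ 0)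
    (hw : ∀ i, ⟪v i, w⟫ = 0) (hu : ∀ i, ⟪v i, u⟫ = 0) : ∃ c : ℝ, c • w = u := by
  have : FiniteDimensional ℝ E := .of_finrank_pos (by lia)
  let K := Submodule.span ℝ (range v)
  have hperp : ∀ {z : E}, (∀ i, ⟪v i, z⟫ = 0) → z ∈ Kᗮ := fun hz =>
    K.mem_orthogonal _ |>.2 fun y hy => by
      induction hy using Submodule.span_induction with
      | mem y hy => obtain ⟨i, rfl⟩ := hy; exact hz i
      | zero => simp
      | add y y' _ _ hy hy' => simp [inner_add_left, hy, hy']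
      | smul c y _ hy => simp [real_inner_smul_left, hy]
  have hdim : Module.finrank ℝ Kᗮ = 1 :=
    K.finrank_add_finrank_orthogonal' (by rw [finrank_span_eq_card hv, hι])
  obtain ⟨c, hc⟩ := (finrank_eq_one_iff_of_nonzero' (⟨w, hperp hw⟩ : Kᗮ)
    (by simpa [Subtype.ext_iff] using hw0)).1 hdim ⟨u, hperp hu⟩
  exact ⟨c, congrArg Subtype.val hc⟩

theorem eq_inv_norm_smul_of_inner_pos {v : ι → E} {w u : E}
    (hv : LinearIndependent ℝ v) (hι : Fintype.card ι + 1 = Module.finrank ℝ E)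
    (hw : ∀ i, ⟪v i, w⟫ = 0) (hu : ∀ i, ⟪v i, u⟫ = 0) (hu1 : ‖u‖ = 1) (hpos : 0 < ⟪w, u⟫) :
    u = ‖w‖⁻¹ • w := by
  have hw0 : w ≠ 0 := by rintro rfl; simp at hpos
  obtain ⟨c, rfl⟩ := exists_smul_eq_of_inner_eq_zero hv hι hw0 hw hu
  rw [real_inner_smul_right, real_inner_self_eq_norm_sq] at hpos
  have hc : 0 < c := pos_of_mul_pos_left hpos (sq_nonneg _)
  rw [norm_smul, Real.norm_of_nonneg hc.le] at hu1
  rw [eq_inv_of_mul_eq_one_left hu1]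

theorem hasDerivAt_norm {F : ℝ → E} {F' : E} {t : ℝ} (hF : HasDerivAt F F' t)
    (h0 : F t ≠ 0) : HasDerivAt (fun s => ‖F s‖) (⟪F t, F'⟫ / ‖F t‖) t := by
  have h := hF.norm_sq.sqrt (by simpa using h0)
  simp only [Real.sqrt_sq (norm_nonneg _)] at h
  exact h.congr_deriv (mul_div_mul_left _ _ two_ne_zero)

end InnerProductSpace

section PartialDerivatives

variable {m : ℕ} {E : Type} [NormedAddCommGroup E] {x : En m} (i : Fin m)

section NormedSpace

variable [NormedSpace ℝ E] {F G : En m → E}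

theorem pd_congr (h : F =ᶠ[𝓝 x] G) : pd i F x = pd i G x := by
  rw [pd, h.fderiv_eq, pd]

theorem pd_sub (hF : DifferentiableAt ℝ F x) (hG : DifferentiableAt ℝ G x) :
    pd i (fun y => F y - G y) x = pd i F x - pd i G x := by
  simp [pd, fderiv_fun_sub hF hG]

theorem pd_sum {κ : Type*} {s : Finset κ} {F : κ → En m → E}
    (hF : ∀ k ∈ s, DifferentiableAt ℝ (F k) x) :
    pd i (fun y => ∑ k ∈ s, F k y) x = ∑ k ∈ s, pd i (F k) x := by
  simp [pd, fderiv_fun_sum hF]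

theorem pd_smul {u : En m → ℝ} (hu : DifferentiableAt ℝ u x) (hF : DifferentiableAt ℝ F x) :
    pd i (fun y => u y • F y) x = u x • pd i F x + pd i u x • F x := by
  simp [pd, fderiv_fun_smul hu hF]

theorem differentiableAt_pd (hF : ContDiffAt ℝ 2 F x) : DifferentiableAt ℝ (pd i F) x :=
  ((hF.fderiv_right (m := 1) (by norm_num)).differentiableAt one_ne_zero).clm_apply
    (differentiableAt_const _)

theorem continuousAt_pd (hF : ContDiffAt ℝ 1 F x) : ContinuousAt (pd i F) x :=
  (hF.fderiv_right (m := 0) (by norm_num)).continuousAt.clm_apply continuousAt_const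

theorem pd_pd_eq_fderiv_fderiv (hF : ContDiffAt ℝ 2 F x) (j : Fin m) :
    pd i (pd j F) x = fderiv ℝ (fderiv ℝ F) x (EuclideanSpace.single i 1)
      (EuclideanSpace.single j 1) := by
  have h := (hF.fderiv_right (m := 1) (by norm_num)).differentiableAt one_ne_zero
  change fderiv ℝ (fun y => fderiv ℝ F y (EuclideanSpace.single j 1)) x _ = _
  simp [fderiv_clm_apply h (differentiableAt_const _)]

theorem pd_comm (hF : ContDiffAt ℝ 2 F x) (j : Fin m) : pd i (pd j F) x = pd j (pd i F) x := by
  rw [pd_pd_eq_fderiv_fderiv i hF, pd_pd_eq_fderiv_fderiv j hF]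
  exact hF.isSymmSndFDerivAt (by simp) _ _

end NormedSpace

variable [InnerProductSpace ℝ E] {F G : En m → E}

theorem pd_inner (hF : DifferentiableAt ℝ F x) (hG : DifferentiableAt ℝ G x) :
    pd i (fun y => ⟪F y, G y⟫) x = ⟪F x, pd i G x⟫ + ⟪pd i F x, G x⟫ := by
  simp [pd, fderiv_inner_apply ℝ hF hG]

theorem inner_pd_eq_zero_of_norm_eq {r : ℝ} (hF : DifferentiableAt ℝ F x)
    (hr : ∀ᶠ y in 𝓝 x, ‖F y‖ = r) : ⟪F x, pd i F x⟫ = 0 := by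
  have hconst : (fun y => ⟪F y, F y⟫) =ᶠ[𝓝 x] fun _ => r ^ 2 := by
    filter_upwards [hr] with y hy
    rw [real_inner_self_eq_norm_sq, hy]
  have h := pd_inner i hF hF
  rw [pd_congr i hconst, real_inner_comm (F x) (pd i F x)] at h
  simpa [pd] using h.symm

end PartialDerivatives

/-- The tangential divergence `∑ g^{ij} ⟪∂_i Y, ∂_j V⟫` of an `ℝ^{n+1}`-valued field `V` along `Y`,
with respect to the metric induced by `Y`; `V` need not be tangent. -/
def tangentDiv {n : ℕ} (Y V : En n → En (n + 1)) (x : En n) : ℝ :=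
  ∑ i, ∑ j, (gmet Y x)⁻¹ i j * ⟪pd i Y x, pd j V x⟫

section InducedMetric

variable {n : ℕ} {Y V W : En n → En (n + 1)} {x : En n}

theorem gmet_eq_gram (Y : En n → En (n + 1)) (x : En n) :
    gmet Y x = Matrix.gram ℝ fun i => pd i Y x :=
  rfl

theorem gmet_inv_comm (i j : Fin n) : (gmet Y x)⁻¹ i j = (gmet Y x)⁻¹ j i := by
  rw [gmet_eq_gram]
  exact (Matrix.isHermitian_gram ℝ fun i => pd i Y x).inv.apply j i

theorem gmet_det_pos (hdet : (gmet Y x).det ≠ 0) : 0 < (gmet Y x).det := by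
  rw [gmet_eq_gram] at hdet ⊢
  exact (Matrix.posSemidef_gram ℝ _).det_nonneg.lt_of_ne' hdet

theorem linearIndependent_pd (hdet : (gmet Y x).det ≠ 0) :
    LinearIndependent ℝ fun i => pd i Y x :=
  Matrix.linearIndependent_of_det_gram_ne_zero hdet

theorem sum_gmet_inv_mul_gmet (hdet : (gmet Y x).det ≠ 0) (i j : Fin n) :
    ∑ k, (gmet Y x)⁻¹ i k * gmet Y x k j = if i = j then 1 else 0 := by
  rw [← Matrix.mul_apply, Matrix.nonsing_inv_mul _ hdet.isUnit, Matrix.one_apply]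

theorem Hmean_eq_tangentDiv (Y V : En n → En (n + 1)) (x : En n) :
    Hmean Y V x = 1 / (n : ℝ) * tangentDiv Y V x :=
  rfl

theorem tangentDiv_congr (h : V =ᶠ[𝓝 x] W) : tangentDiv Y V x = tangentDiv Y W x := by
  simp only [tangentDiv, pd_congr _ h]

theorem tangentDiv_self (hdet : (gmet Y x).det ≠ 0) : tangentDiv Y Y x = n := by
  have h (i : Fin n) : ∑ j, (gmet Y x)⁻¹ i j * ⟪pd i Y x, pd j Y x⟫ = 1 := by
    simp only [real_inner_comm _ (pd i Y x)]
    exact (sum_gmet_inv_mul_gmet hdet i i).trans (if_pos rfl)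
  simp [tangentDiv, h]

theorem tangentDiv_sum {κ : Type*} {s : Finset κ} {V : κ → En n → En (n + 1)}
    (hV : ∀ k ∈ s, DifferentiableAt ℝ (V k) x) :
    tangentDiv Y (fun y => ∑ k ∈ s, V k y) x = ∑ k ∈ s, tangentDiv Y (V k) x := by
  simp only [tangentDiv, pd_sum _ hV, inner_sum, Finset.mul_sum]
  exact (Finset.sum_congr rfl fun i _ => Finset.sum_comm).trans Finset.sum_comm

theorem tangentDiv_sub (hV : DifferentiableAt ℝ V x) (hW : DifferentiableAt ℝ W x) :
    tangentDiv Y (fun y => V y - W y) x = tangentDiv Y V x - tangentDiv Y W x := by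
  simp only [tangentDiv, pd_sub _ hV hW, inner_sub_right, mul_sub, Finset.sum_sub_distrib]

theorem tangentDiv_smul {u : En n → ℝ} (hu : DifferentiableAt ℝ u x)
    (hV : DifferentiableAt ℝ V x) :
    tangentDiv Y (fun y => u y • V y) x = u x * tangentDiv Y V x +
      ∑ i, ∑ j, (gmet Y x)⁻¹ i j * (pd j u x * ⟪pd i Y x, V x⟫) := by
  simp only [tangentDiv, pd_smul _ hu hV, inner_add_right, real_inner_smul_right, mul_add,
    Finset.sum_add_distrib, Finset.mul_sum, mul_left_comm (u x)]

theorem tangentDiv_const_smul (c : ℝ) (hV : DifferentiableAt ℝ V x) :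
    tangentDiv Y (fun y => c • V y) x = c * tangentDiv Y V x := by
  rw [tangentDiv_smul (differentiableAt_const c) hV]
  simp [pd]

theorem tangentDiv_smul_of_inner_eq_zero {u : En n → ℝ} (hu : DifferentiableAt ℝ u x)
    (hV : DifferentiableAt ℝ V x) (hperp : ∀ i, ⟪pd i Y x, V x⟫ = 0) :
    tangentDiv Y (fun y => u y • V y) x = u x * tangentDiv Y V x := by
  simp [tangentDiv_smul hu hV, hperp]

theorem tangentDiv_smul_pd {u : En n → ℝ} (hu : DifferentiableAt ℝ u x) (l : Fin n)
    (hY : DifferentiableAt ℝ (pd l Y) x) (hdet : (gmet Y x).det ≠ 0) :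
    tangentDiv Y (fun y => u y • pd l Y y) x = u x * tangentDiv Y (pd l Y) x + pd l u x := by
  rw [tangentDiv_smul hu hY, Finset.sum_comm]
  congr 1
  calc ∑ j, ∑ i, (gmet Y x)⁻¹ i j * (pd j u x * ⟪pd i Y x, pd l Y x⟫)
      = ∑ j, pd j u x * ∑ i, (gmet Y x)⁻¹ j i * gmet Y x i l := by
        refine Finset.sum_congr rfl fun j _ => ?_
        rw [Finset.mul_sum]
        refine Finset.sum_congr rfl fun i _ => ?_
        rw [gmet_inv_comm i j, mul_left_comm]
        rfl
    _ = pd l u x := by simp [sum_gmet_inv_mul_gmet hdet]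

end InducedMetric

section VolumeElement

variable {n : ℕ} {Φ : En n → En (n + 1)} {x : En n}

theorem differentiableAt_gmet (hΦ : ContDiffAt ℝ 2 Φ x) (i j : Fin n) :
    DifferentiableAt ℝ (fun y => gmet Φ y i j) x :=
  (differentiableAt_pd i hΦ).inner ℝ (differentiableAt_pd j hΦ)

theorem pd_gmet (hΦ : ContDiffAt ℝ 2 Φ x) (l i j : Fin n) :
    pd l (fun y => gmet Φ y i j) x =
      ⟪pd i Φ x, pd j (pd l Φ) x⟫ + ⟪pd j Φ x, pd i (pd l Φ) x⟫ := by
  change pd l (fun y => ⟪pd i Φ y, pd j Φ y⟫) x = _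
  rw [pd_inner l (differentiableAt_pd i hΦ) (differentiableAt_pd j hΦ), pd_comm l hΦ j,
    pd_comm l hΦ i, real_inner_comm (pd j Φ x)]

theorem differentiableAt_gmet_inv (hΦ : ContDiffAt ℝ 2 Φ x) (hdet : (gmet Φ x).det ≠ 0)
    (i j : Fin n) : DifferentiableAt ℝ (fun y => (gmet Φ y)⁻¹ i j) x :=
  differentiableAt_matrix_inv (differentiableAt_gmet hΦ) hdet i j

theorem differentiableAt_vElem (hΦ : ContDiffAt ℝ 2 Φ x) (hdet : (gmet Φ x).det ≠ 0) :
    DifferentiableAt ℝ (vElem Φ) x :=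
  (differentiableAt_matrix_det (differentiableAt_gmet hΦ)).sqrt hdet

theorem vElem_pos (hdet : (gmet Φ x).det ≠ 0) : 0 < vElem Φ x :=
  Real.sqrt_pos.2 (gmet_det_pos hdet)

theorem pd_det_gmet (hΦ : ContDiffAt ℝ 2 Φ x) (hdet : (gmet Φ x).det ≠ 0) (l : Fin n) :
    pd l (fun y => (gmet Φ y).det) x = 2 * (gmet Φ x).det * tangentDiv Φ (pd l Φ) x := by
  have hadj (i j : Fin n) : (gmet Φ x).adjugate j i = (gmet Φ x).det * (gmet Φ x)⁻¹ i j := by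
    rw [gmet_inv_comm i j, Matrix.inv_def, Matrix.smul_apply, Ring.inverse_eq_inv', smul_eq_mul,
      mul_inv_cancel_left₀ hdet]
  have hswap : ∑ i, ∑ j, (gmet Φ x)⁻¹ i j * ⟪pd j Φ x, pd i (pd l Φ) x⟫ =
      tangentDiv Φ (pd l Φ) x := by
    rw [Finset.sum_comm]
    exact Finset.sum_congr rfl fun i _ => Finset.sum_congr rfl fun j _ => by
      rw [gmet_inv_comm j i]
  have hJacobi : pd l (fun y => (gmet Φ y).det) x =
      ∑ i, ∑ j, (gmet Φ x).adjugate j i * pd l (fun y => gmet Φ y i j) x := by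
    rw [pd, (hasFDerivAt_matrix_det fun i j => (differentiableAt_gmet hΦ i j).hasFDerivAt).fderiv]
    simp [pd]
  calc pd l (fun y => (gmet Φ y).det) x
      = (gmet Φ x).det * (tangentDiv Φ (pd l Φ) x +
          ∑ i, ∑ j, (gmet Φ x)⁻¹ i j * ⟪pd j Φ x, pd i (pd l Φ) x⟫) := by
        simp only [hJacobi, hadj, pd_gmet hΦ, tangentDiv, ← Finset.sum_add_distrib,
          Finset.mul_sum, mul_add, mul_assoc]
    _ = 2 * (gmet Φ x).det * tangentDiv Φ (pd l Φ) x := by rw [hswap]; ring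

theorem pd_vElem (hΦ : ContDiffAt ℝ 2 Φ x) (hdet : (gmet Φ x).det ≠ 0) (l : Fin n) :
    pd l (vElem Φ) x = vElem Φ x * tangentDiv Φ (pd l Φ) x := by
  have hsqrt := ((differentiableAt_matrix_det (differentiableAt_gmet hΦ)).hasFDerivAt.sqrt hdet)
  have hpos := vElem_pos hdet
  have hsq : vElem Φ x ^ 2 = (gmet Φ x).det := Real.sq_sqrt (gmet_det_pos hdet).le
  have h : pd l (vElem Φ) x = 1 / (2 * vElem Φ x) * pd l (fun y => (gmet Φ y).det) x := by
    change fderiv ℝ (fun y => √(gmet Φ y).det) x _ = _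
    rw [hsqrt.fderiv]
    simp [pd, vElem]
  rw [h, pd_det_gmet hΦ hdet, ← hsq]
  field_simp

theorem tangentDiv_sum_smul_pd (hΦ : ContDiffAt ℝ 2 Φ x) (hdet : (gmet Φ x).det ≠ 0)
    {w : Fin n → En n → ℝ} (hw : ∀ l, DifferentiableAt ℝ (w l) x) :
    tangentDiv Φ (fun y => ∑ l, w l y • pd l Φ y) x =
      (vElem Φ x)⁻¹ * ∑ l, pd l (fun y => vElem Φ y * w l y) x := by
  have hpd (l : Fin n) : DifferentiableAt ℝ (pd l Φ) x := differentiableAt_pd l hΦ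
  rw [tangentDiv_sum fun l _ => (hw l).fun_smul (hpd l), Finset.mul_sum]
  refine Finset.sum_congr rfl fun l _ => ?_
  have hprod := pd_smul l (differentiableAt_vElem hΦ hdet) (hw l)
  simp only [smul_eq_mul, pd_vElem hΦ hdet] at hprod
  rw [tangentDiv_smul_pd (hw l) l (hpd l) hdet, hprod]
  field_simp [(vElem_pos hdet).ne']
  ring

end VolumeElement

/-- The contravariant components `∑ g^{ij} ∂_j u` of the gradient of `u` in the metric of `Φ`. -/
def gradCoord {n : ℕ} (Φ : En n → En (n + 1)) (u : En n → ℝ) (i : Fin n) (x : En n) : ℝ :=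
  ∑ j, (gmet Φ x)⁻¹ i j * pd j u x

section Gradient

variable {n : ℕ} {Φ : En n → En (n + 1)} {u : En n → ℝ} {x : En n}

theorem gradV_eq_sum_gradCoord (Φ : En n → En (n + 1)) (u : En n → ℝ) (x : En n) :
    gradV Φ u x = ∑ l, gradCoord Φ u l x • pd l Φ x := by
  rw [gradV, Finset.sum_comm]
  simp only [gradCoord, Finset.sum_smul, gmet_inv_comm (Y := Φ) (x := x)]

theorem inner_gradV_pd (hdet : (gmet Φ x).det ≠ 0) (l : Fin n) :
    ⟪gradV Φ u x, pd l Φ x⟫ = pd l u x := by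
  have h (i : Fin n) : ∑ j, (gmet Φ x)⁻¹ i j * pd i u x * ⟪pd j Φ x, pd l Φ x⟫ =
      pd i u x * ∑ j, (gmet Φ x)⁻¹ i j * gmet Φ x j l := by
    rw [Finset.mul_sum]
    exact Finset.sum_congr rfl fun j _ => by rw [mul_right_comm, mul_comm]; rfl
  simp [gradV, sum_inner, real_inner_smul_left, h, sum_gmet_inv_mul_gmet hdet]

theorem inner_gradV_eq_zero {v : En (n + 1)} (hv : ∀ i, ⟪v, pd i Φ x⟫ = 0) :
    ⟪v, gradV Φ u x⟫ = 0 := by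
  simp [gradV, inner_sum, real_inner_smul_right, hv]

theorem differentiableAt_gradCoord (hΦ : ContDiffAt ℝ 2 Φ x) (hu : ContDiffAt ℝ 2 u x)
    (hdet : (gmet Φ x).det ≠ 0) (i : Fin n) : DifferentiableAt ℝ (gradCoord Φ u i) x :=
  .fun_sum fun j _ => (differentiableAt_gmet_inv hΦ hdet i j).mul (differentiableAt_pd j hu)

theorem differentiableAt_gradV (hΦ : ContDiffAt ℝ 2 Φ x) (hu : ContDiffAt ℝ 2 u x)
    (hdet : (gmet Φ x).det ≠ 0) : DifferentiableAt ℝ (gradV Φ u) x := by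
  rw [funext (gradV_eq_sum_gradCoord Φ u)]
  exact .fun_sum fun l _ =>
    (differentiableAt_gradCoord hΦ hu hdet l).smul (differentiableAt_pd l hΦ)

theorem tangentDiv_gradV (hΦ : ContDiffAt ℝ 2 Φ x) (hu : ContDiffAt ℝ 2 u x)
    (hdet : (gmet Φ x).det ≠ 0) : tangentDiv Φ (gradV Φ u) x = lapl Φ u x := by
  rw [funext (gradV_eq_sum_gradCoord Φ u),
    tangentDiv_sum_smul_pd hΦ hdet (differentiableAt_gradCoord hΦ hu hdet), lapl]
  congr 1
  refine Finset.sum_congr rfl fun i _ => ?_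
  have hterm (j : Fin n) :
      DifferentiableAt ℝ (fun y => vElem Φ y * (gmet Φ y)⁻¹ i j * pd j u y) x :=
    ((differentiableAt_vElem hΦ hdet).mul (differentiableAt_gmet_inv hΦ hdet i j)).mul
      (differentiableAt_pd j hu)
  rw [← pd_sum i fun j _ => hterm j]
  simp only [gradCoord, Finset.mul_sum, mul_assoc]

end Gradient

section ContinuousInParameter

variable {n : ℕ} {P : Type*} [TopologicalSpace P] {Y : P → En n → En (n + 1)} {p : P}

theorem continuousAt_gmet {y : P → En n} (h : ∀ i, ContinuousAt (fun q => pd i (Y q) (y q)) p) :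
    ContinuousAt (fun q => gmet (Y q) (y q)) p :=
  continuousAt_pi.2 fun i => continuousAt_pi.2 fun j => (h i).inner (h j)

theorem continuousAt_tangentDiv {V : En n → En (n + 1)} {x : En n}
    (h : ∀ i, ContinuousAt (fun q => pd i (Y q) x) p) (hdet : (gmet (Y p) x).det ≠ 0) :
    ContinuousAt (fun q => tangentDiv (Y q) V x) p := by
  have hinv : ContinuousAt (fun q => (gmet (Y q) x)⁻¹) p :=
    ContinuousAt.comp (g := Inv.inv) (continuousAt_matrix_inv _ (by
      simpa [Ring.inverse_eq_inv'] using continuousAt_inv₀ hdet)) (continuousAt_gmet h)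
  refine tendsto_finsetSum _ fun i _ => tendsto_finsetSum _ fun j _ => ?_
  exact (continuousAt_pi.1 (continuousAt_pi.1 hinv i) j).mul ((h i).inner continuousAt_const)

end ContinuousInParameter

/-- The field `X_t - t ∇f`, an unnormalized normal field of the variation `X_t` of a piece of the
unit sphere. -/
def varNormal {n : ℕ} (f : En n → ℝ) (φ : ℝ → ℝ) (Φ : En n → En (n + 1)) (t : ℝ) (x : En n) :
    En (n + 1) :=
  Xvar f φ Φ t x - t • gradV Φ f x

section Variation

variable {n : ℕ} {Φ : En n → En (n + 1)} {f : En n → ℝ} {φ : ℝ → ℝ} {x : En n}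

theorem Xvar_zero (hφ0 : φ 0 = 0) : Xvar f φ Φ 0 = Φ := by
  ext1 y
  simp [Xvar, hφ0]

theorem differentiableAt_Xvar (t : ℝ) (hΦ : DifferentiableAt ℝ Φ x)
    (hf : DifferentiableAt ℝ f x) : DifferentiableAt ℝ (Xvar f φ Φ t) x :=
  (((differentiableAt_const _).add (hf.const_mul t)).add_const _).smul hΦ

theorem pd_Xvar (t : ℝ) (hΦ : DifferentiableAt ℝ Φ x) (hf : DifferentiableAt ℝ f x)
    (i : Fin n) :
    pd i (Xvar f φ Φ t) x = (1 + t * f x + φ t) • pd i Φ x + (t * pd i f x) • Φ x := by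
  have hc : DifferentiableAt ℝ (fun y => 1 + t * f y + φ t) x :=
    ((differentiableAt_const _).add (hf.const_mul t)).add_const _
  have hpd : pd i (fun y => 1 + t * f y + φ t) x = t * pd i f x := by
    simp [pd, fderiv_const_mul hf]
  exact (pd_smul i hc hΦ).trans (by rw [hpd])

theorem inner_pd_Xvar_varNormal (t : ℝ) (hΦ : DifferentiableAt ℝ Φ x)
    (hf : DifferentiableAt ℝ f x) (hsph : ∀ᶠ y in 𝓝 x, ‖Φ y‖ = 1)
    (hdet : (gmet Φ x).det ≠ 0) (i : Fin n) :
    ⟪pd i (Xvar f φ Φ t) x, varNormal f φ Φ t x⟫ = 0 := by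
  have hperp (j : Fin n) : ⟪Φ x, pd j Φ x⟫ = 0 := inner_pd_eq_zero_of_norm_eq j hΦ hsph
  have hgrad : ⟪pd i Φ x, gradV Φ f x⟫ = pd i f x := by
    rw [real_inner_comm, inner_gradV_pd hdet]
  have hperp' : ⟪pd i Φ x, Φ x⟫ = 0 := by rw [real_inner_comm, hperp]
  have hunit : ⟪Φ x, Φ x⟫ = 1 := by rw [real_inner_self_eq_norm_sq, hsph.self_of_nhds, one_pow]
  simp only [pd_Xvar t hΦ hf, varNormal, Xvar, inner_add_left, inner_sub_right,
    real_inner_smul_left, real_inner_smul_right, hgrad, hperp', hunit,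
    inner_gradV_eq_zero hperp]
  ring

theorem differentiableAt_varNormal (t : ℝ) (hΦ : ContDiffAt ℝ 2 Φ x) (hf : ContDiffAt ℝ 2 f x)
    (hdet : (gmet Φ x).det ≠ 0) : DifferentiableAt ℝ (varNormal f φ Φ t) x :=
  (differentiableAt_Xvar t (hΦ.differentiableAt two_ne_zero)
    (hf.differentiableAt two_ne_zero)).sub ((differentiableAt_gradV hΦ hf hdet).const_smul t)

theorem tangentDiv_Xvar_varNormal (t : ℝ) (hΦ : ContDiffAt ℝ 2 Φ x) (hf : ContDiffAt ℝ 2 f x)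
    (hdet : (gmet Φ x).det ≠ 0) (hdet' : (gmet (Xvar f φ Φ t) x).det ≠ 0) :
    tangentDiv (Xvar f φ Φ t) (varNormal f φ Φ t) x =
      n - t * tangentDiv (Xvar f φ Φ t) (gradV Φ f) x := by
  have hX : DifferentiableAt ℝ (Xvar f φ Φ t) x :=
    differentiableAt_Xvar t (hΦ.differentiableAt two_ne_zero) (hf.differentiableAt two_ne_zero)
  have hgrad := differentiableAt_gradV hΦ hf hdet
  have h := tangentDiv_sub (Y := Xvar f φ Φ t) hX (hgrad.fun_const_smul t)
  rwa [tangentDiv_self hdet', tangentDiv_const_smul t hgrad] at h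

theorem Hmean_Xvar (hn : n ≠ 0) (t : ℝ) (hΦ : ContDiffAt ℝ 2 Φ x) (hf : ContDiffAt ℝ 2 f x)
    (hsph : ∀ᶠ y in 𝓝 x, ‖Φ y‖ = 1) (hdet : (gmet Φ x).det ≠ 0)
    (hdet' : (gmet (Xvar f φ Φ t) x).det ≠ 0) (hW : varNormal f φ Φ t x ≠ 0)
    {ν : En n → En (n + 1)}
    (hν : ∀ᶠ y in 𝓝 x, ν y = ‖varNormal f φ Φ t y‖⁻¹ • varNormal f φ Φ t y) :
    Hmean (Xvar f φ Φ t) ν x =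
      ‖varNormal f φ Φ t x‖⁻¹ *
        (1 - 1 / (n : ℝ) * (t * tangentDiv (Xvar f φ Φ t) (gradV Φ f) x)) := by
  have hWdiff : DifferentiableAt ℝ (varNormal f φ Φ t) x :=
    differentiableAt_varNormal t hΦ hf hdet
  have hperp := inner_pd_Xvar_varNormal (φ := φ) t (hΦ.differentiableAt two_ne_zero)
    (hf.differentiableAt two_ne_zero) hsph hdet
  rw [Hmean_eq_tangentDiv, tangentDiv_congr hν, tangentDiv_smul_of_inner_eq_zero
    ((hWdiff.norm ℝ hW).fun_inv (norm_ne_zero_iff.2 hW)) hWdiff hperp,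
    tangentDiv_Xvar_varNormal t hΦ hf hdet hdet']
  field_simp

theorem hasDerivAt_norm_varNormal (hφ : DifferentiableAt ℝ φ 0) (hφ0 : φ 0 = 0)
    (hΦ : DifferentiableAt ℝ Φ x) (hsph : ∀ᶠ y in 𝓝 x, ‖Φ y‖ = 1) :
    HasDerivAt (fun t => ‖varNormal f φ Φ t x‖) (f x + deriv φ 0) 0 := by
  have hunit : ‖Φ x‖ = 1 := hsph.self_of_nhds
  have hW0 : varNormal f φ Φ 0 x = Φ x := by simp [varNormal, Xvar_zero hφ0]
  have hc : HasDerivAt (fun t => 1 + t * f x + φ t) (f x + deriv φ 0) 0 := by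
    simpa using (((hasDerivAt_id (0 : ℝ)).mul_const (f x)).const_add 1).fun_add hφ.hasDerivAt
  have hW : HasDerivAt (fun t => varNormal f φ Φ t x)
      ((f x + deriv φ 0) • Φ x - gradV Φ f x) 0 :=
    ((hc.smul_const (Φ x)).sub ((hasDerivAt_id (0 : ℝ)).smul_const (gradV Φ f x))).congr_deriv
      (by rw [one_smul])
  have hnorm := hasDerivAt_norm hW (by rw [hW0]; exact norm_ne_zero_iff.1 (by simp [hunit]))
  have hgrad : ⟪Φ x, gradV Φ f x⟫ = 0 :=
    inner_gradV_eq_zero fun i => inner_pd_eq_zero_of_norm_eq i hΦ hsph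
  simpa [hW0, inner_sub_right, real_inner_smul_right, hunit, hgrad] using hnorm

theorem continuousAt_pd_Xvar (hΦ : ContDiffAt ℝ 1 Φ x) (hf : ContDiffAt ℝ 1 f x) {t : ℝ}
    (hφ : ContinuousAt φ t) (i : Fin n) :
    ContinuousAt (fun p : ℝ × En n => pd i (Xvar f φ Φ p.1) p.2) (t, x) := by
  have hformula : ∀ᶠ p : ℝ × En n in 𝓝 (t, x), pd i (Xvar f φ Φ p.1) p.2 =
      (1 + p.1 * f p.2 + φ p.1) • pd i Φ p.2 + (p.1 * pd i f p.2) • Φ p.2 := by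
    filter_upwards [continuousAt_snd.eventually (hΦ.eventually (by simp)),
      continuousAt_snd.eventually (hf.eventually (by simp))] with p hΦp hfp
    exact pd_Xvar p.1 (hΦp.differentiableAt one_ne_zero) (hfp.differentiableAt one_ne_zero) i
  refine ContinuousAt.congr_of_eventuallyEq ?_ hformula
  have hscale : ContinuousAt (fun p : ℝ × En n => 1 + p.1 * f p.2 + φ p.1) (t, x) :=
    (continuousAt_const.add (continuousAt_fst.mul hf.continuousAt.snd')).add hφ.fst'
  exact (hscale.smul (continuousAt_pd i hΦ).snd').add
    ((continuousAt_fst.mul (continuousAt_pd i hf).snd').smul hΦ.continuousAt.snd')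

theorem continuousAt_varNormal (hΦ : ContDiffAt ℝ 2 Φ x) (hf : ContDiffAt ℝ 2 f x)
    (hdet : (gmet Φ x).det ≠ 0) {t : ℝ} (hφ : ContinuousAt φ t) :
    ContinuousAt (fun p : ℝ × En n => varNormal f φ Φ p.1 p.2) (t, x) := by
  have hscale : ContinuousAt (fun p : ℝ × En n => 1 + p.1 * f p.2 + φ p.1) (t, x) :=
    (continuousAt_const.add (continuousAt_fst.mul hf.continuousAt.snd')).add hφ.fst'
  exact (hscale.smul hΦ.continuousAt.snd').sub
    (continuousAt_fst.smul (differentiableAt_gradV hΦ hf hdet).continuousAt.snd')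

theorem eventually_det_gmet_Xvar_ne_zero (hΦ : ContDiffAt ℝ 1 Φ x) (hf : ContDiffAt ℝ 1 f x)
    (hφ : ContinuousAt φ 0) (hφ0 : φ 0 = 0) (hdet : (gmet Φ x).det ≠ 0) :
    ∀ᶠ p : ℝ × En n in 𝓝 (0, x), (gmet (Xvar f φ Φ p.1) p.2).det ≠ 0 := by
  have hg := continuousAt_gmet (continuousAt_pd_Xvar hΦ hf hφ)
  have hdetc : ContinuousAt (fun p : ℝ × En n => (gmet (Xvar f φ Φ p.1) p.2).det) (0, x) :=
    (continuous_id.matrix_det (R := ℝ)).continuousAt.comp hg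
  exact hdetc.eventually_ne (by simpa only [Xvar_zero hφ0] using hdet)

theorem eventually_eq_inv_norm_smul_varNormal (hΦ : ContDiffAt ℝ 2 Φ x)
    (hf : ContDiffAt ℝ 2 f x) (hφ : ContinuousAt φ 0) (hφ0 : φ 0 = 0)
    (hsph : ∀ᶠ y in 𝓝 x, ‖Φ y‖ = 1) (hdet : (gmet Φ x).det ≠ 0) {N : ℝ → En n → En (n + 1)}
    (hNcont : ContinuousAt (fun p : ℝ × En n => N p.1 p.2) (0, x))
    (hNunit : ∀ᶠ p : ℝ × En n in 𝓝 (0, x), ‖N p.1 p.2‖ = 1)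
    (hNorth : ∀ᶠ p : ℝ × En n in 𝓝 (0, x), ∀ i, ⟪N p.1 p.2, pd i (Xvar f φ Φ p.1) p.2⟫ = 0)
    (hN0 : N 0 x = Φ x) :
    ∀ᶠ p : ℝ × En n in 𝓝 (0, x),
      N p.1 p.2 = ‖varNormal f φ Φ p.1 p.2‖⁻¹ • varNormal f φ Φ p.1 p.2 := by
  have hpos : ∀ᶠ p : ℝ × En n in 𝓝 (0, x), 0 < ⟪varNormal f φ Φ p.1 p.2, N p.1 p.2⟫ := by
    refine ((continuousAt_varNormal hΦ hf hdet hφ).inner hNcont).eventually_const_lt ?_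
    simp [varNormal, Xvar_zero hφ0, hN0, hsph.self_of_nhds]
  have hdet_near : ∀ᶠ y in 𝓝 x, (gmet Φ y).det ≠ 0 :=
    (differentiableAt_matrix_det (differentiableAt_gmet hΦ)).continuousAt.eventually_ne hdet
  filter_upwards [hpos, hNunit, hNorth,
    eventually_det_gmet_Xvar_ne_zero (hΦ.of_le one_le_two) (hf.of_le one_le_two) hφ hφ0 hdet,
    continuousAt_snd.eventually (hΦ.eventually (by simp)),
    continuousAt_snd.eventually (hf.eventually (by simp)),
    continuousAt_snd.eventually hsph.eventually_nhds,
    continuousAt_snd.eventually hdet_near] with p hpos hunit horth hdetX hΦp hfp hsphp hdetp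
  exact eq_inv_norm_smul_of_inner_pos (linearIndependent_pd hdetX) (by simp)
    (inner_pd_Xvar_varNormal p.1 (hΦp.differentiableAt two_ne_zero)
      (hfp.differentiableAt two_ne_zero) hsphp hdetp)
    (fun i => by rw [real_inner_comm, horth i]) hunit hpos

theorem hasDerivAt_mul_tangentDiv_gradV (hΦ : ContDiffAt ℝ 2 Φ x) (hf : ContDiffAt ℝ 2 f x)
    (hφ : ContinuousAt φ 0) (hφ0 : φ 0 = 0) (hdet : (gmet Φ x).det ≠ 0) :
    HasDerivAt (fun t => t * tangentDiv (Xvar f φ Φ t) (gradV Φ f) x) (lapl Φ f x) 0 := by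
  have hpd (i : Fin n) : ContinuousAt (fun t => pd i (Xvar f φ Φ t) x) 0 :=
    (continuousAt_pd_Xvar (hΦ.of_le one_le_two) (hf.of_le one_le_two) hφ i).comp
      (f := fun t : ℝ => (t, x)) (Continuous.prodMk_left x).continuousAt
  refine (hasDerivAt_mul_of_continuousAt_zero
    (continuousAt_tangentDiv hpd (by rwa [Xvar_zero hφ0]))).congr_deriv ?_
  rw [Xvar_zero hφ0, tangentDiv_gradV hΦ hf hdet]

end Variation

theorem first_variation_mean_curvature_general {n : ℕ} (hn : n ≠ 0) {Φ : En n → En (n + 1)}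
    {f : En n → ℝ} {φ : ℝ → ℝ} {x : En n} (hΦ : ContDiffAt ℝ 2 Φ x) (hf : ContDiffAt ℝ 2 f x)
    (hφ : DifferentiableAt ℝ φ 0) (hφ0 : φ 0 = 0) (hsph : ∀ᶠ y in 𝓝 x, ‖Φ y‖ = 1)
    (himm : (gmet Φ x).det ≠ 0) {N : ℝ → En n → En (n + 1)}
    (hNcont : ContinuousAt (fun p : ℝ × En n => N p.1 p.2) (0, x))
    (hNunit : ∀ᶠ p : ℝ × En n in 𝓝 (0, x), ‖N p.1 p.2‖ = 1)
    (hNorth : ∀ᶠ p : ℝ × En n in 𝓝 (0, x), ∀ i, ⟪N p.1 p.2, pd i (Xvar f φ Φ p.1) p.2⟫ = 0)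
    (hN0 : N 0 x = Φ x) :
    HasDerivAt (fun t => Hmean (Xvar f φ Φ t) (N t) x)
      (-(f x + deriv φ 0) - (1 / (n : ℝ)) * lapl Φ f x) 0 := by
  have hnorm := hasDerivAt_norm_varNormal (f := f) hφ hφ0 (hΦ.differentiableAt two_ne_zero) hsph
  have hnorm0 : ‖varNormal f φ Φ 0 x‖ = 1 := by
    simp [varNormal, Xvar_zero hφ0, hsph.self_of_nhds]
  have hdet := eventually_det_gmet_Xvar_ne_zero (hΦ.of_le one_le_two) (hf.of_le one_le_two)
    hφ.continuousAt hφ0 himm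
  have hN := eventually_eq_inv_norm_smul_varNormal hΦ hf hφ.continuousAt hφ0 hsph himm hNcont
    hNunit hNorth hN0
  have hH : ∀ᶠ t in 𝓝 0, Hmean (Xvar f φ Φ t) (N t) x = ‖varNormal f φ Φ t x‖⁻¹ *
      (1 - 1 / (n : ℝ) * (t * tangentDiv (Xvar f φ Φ t) (gradV Φ f) x)) := by
    filter_upwards [hN.curry_nhds, hdet.curry_nhds,
      hnorm.continuousAt.eventually_ne (hnorm0.trans_ne one_ne_zero)] with t hNt hdett hWt
    exact Hmean_Xvar hn t hΦ hf hsph himm hdett.self_of_nhds (norm_ne_zero_iff.1 hWt) hNt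
  have hdiv := hasDerivAt_mul_tangentDiv_gradV hΦ hf hφ.continuousAt hφ0 himm
  refine HasDerivAt.congr_of_eventuallyEq ?_ hH
  refine ((hnorm.fun_inv (hnorm0.trans_ne one_ne_zero)).mul
    ((hdiv.const_mul (1 / (n : ℝ))).const_sub 1)).congr_deriv ?_
  simp only [hnorm0]
  ring

/-- `∂H/∂t |_(t=0) = −(f + φ'(0)) − (1/n) Δf`. -/
theorem first_variation_mean_curvature {n : ℕ} (hn : 1 ≤ n) (U : Set (En n)) (hU : IsOpen U)
    (Φ : En n → En (n + 1)) (f : En n → ℝ) (φ : ℝ → ℝ) (ε : ℝ) (hε : 0 < ε)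
    (hΦ : ContDiffOn ℝ (⊤ : ℕ∞) Φ U) (hf : ContDiffOn ℝ (⊤ : ℕ∞) f U)
    (hφ : ContDiffOn ℝ (⊤ : ℕ∞) φ (Ioo (-ε) ε)) (hφ0 : φ 0 = 0)
    (hsph : ∀ x ∈ U, ‖Φ x‖ = 1)
    (himm : ∀ x ∈ U, (gmet Φ x).PosDef)
    (N : ℝ → En n → En (n + 1))
    (hNsm : ContDiffOn ℝ (⊤ : ℕ∞) (fun p : ℝ × En n => N p.1 p.2) (Ioo (-ε) ε ×ˢ U))
    (hNunit : ∀ t ∈ Ioo (-ε) ε, ∀ x ∈ U, ‖N t x‖ = 1)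
    (hNorth : ∀ t ∈ Ioo (-ε) ε, ∀ x ∈ U, ∀ i : Fin n, ⟪N t x, pd i (Xvar f φ Φ t) x⟫ = 0)
    (hN0 : ∀ x ∈ U, N 0 x = Φ x) :
    ∀ x ∈ U,
      deriv (fun t => Hmean (Xvar f φ Φ t) (N t) x) 0
        = -(f x + deriv φ 0) - (1 / (n : ℝ)) * lapl Φ f x := by
  intro x hx
  have hUx : U ∈ 𝓝 x := hU.mem_nhds hx
  have hI : Ioo (-ε) ε ∈ 𝓝 (0 : ℝ) := Ioo_mem_nhds (neg_lt_zero.2 hε) hε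
  have hIU : Ioo (-ε) ε ×ˢ U ∈ 𝓝 ((0 : ℝ), x) := prod_mem_nhds hI hUx
  have htwo : (2 : WithTop ℕ∞) ≤ (⊤ : ℕ∞) := WithTop.coe_le_coe.2 le_top
  refine (first_variation_mean_curvature_general (Nat.one_le_iff_ne_zero.1 hn)
    ((hΦ.contDiffAt hUx).of_le htwo) ((hf.contDiffAt hUx).of_le htwo)
    ((hφ.contDiffAt hI).differentiableAt (by simp)) hφ0
    (Filter.eventually_of_mem hUx hsph) (himm x hx).det_pos.ne'
    (hNsm.contDiffAt hIU).continuousAt ?_ ?_ (hN0 x hx)).deriv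
  · exact Filter.eventually_of_mem hIU fun p hp => hNunit p.1 hp.1 p.2 hp.2
  · exact Filter.eventually_of_mem hIU fun p hp => hNorth p.1 hp.1 p.2 hp.2
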